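/- arXiv:1108.3385 — 2 statements merged into one kernel-verified Lean document; each statement's English description precedes it below -/
import Mathlib

section
/- Let d ≥ 1 and γ > −1, and in d+1 variables set P_4 = S_{(4)} + a·S_{(3,1)} + b·S_{(2,2)}, where a = −4(γ+4)/(d(γ+1)) and b = 6(γ+3)(γ+4)/(d(γ+1)(γ+2)). Then P_4 is an orthogonal polynomial of degree 4 for W_γ on T^d: for every polynomial q of degree at most 3 in d variables, ∫_{T^d} P_4(x_1,…,x_d, 1−|x|_1) q(x) W_γ(x) dx = 0. -/
open MeasureTheory Finset

/-- The standard simplex `T^d` in `ℝ^d`. -/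
def Td (d : ℕ) : Set (Fin d → ℝ) :=
  {x | (∀ i, 0 ≤ x i) ∧ ∑ i, x i ≤ 1}

/-- The weight function `W_γ(x) = (x_1 ⋯ x_d (1 - |x|₁))^γ` on `T^d`. -/
noncomputable def Wg (d : ℕ) (γ : ℝ) (x : Fin d → ℝ) : ℝ :=
  ((∏ i, x i) * (1 - ∑ i, x i)) ^ γ

/-- The normalization constant `w_γ = Γ((d+1)(γ+1)) / Γ(γ+1)^(d+1)`. -/
noncomputable def wg (d : ℕ) (γ : ℝ) : ℝ :=
  Real.Gamma ((d + 1) * (γ + 1)) / (Real.Gamma (γ + 1)) ^ (d + 1)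

/-- Homogeneous coordinates: `x ↦ (x, 1 - |x|₁) ∈ 𝒯^{d+1}`. -/
noncomputable def lift (d : ℕ) (x : Fin d → ℝ) : Fin (d + 1) → ℝ :=
  Fin.snoc x (1 - ∑ i, x i)

/-- `P_4 = S_{(4)} + a S_{(3,1)} + b S_{(2,2)}` in `d+1` real variables. -/
noncomputable def P4eval (d : ℕ) (a b : ℝ) (x : Fin (d + 1) → ℝ) : ℝ :=
  (∑ i, x i ^ 4)
    + a * ∑ i, ∑ j ∈ Finset.univ.filter (fun j => j ≠ i), x i ^ 3 * x j
    + b * ∑ i, ∑ j ∈ Finset.univ.filter (fun j => i < j), x i ^ 2 * x j ^ 2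

/-- The density `t ^ (c - 1) / Γ(c)` on `t ≥ 0`, extended by zero: the kernel of the
Riemann–Liouville fractional integral of order `c`. -/
noncomputable def rlKernel (c t : ℝ) : ENNReal :=
  ENNReal.ofReal (if 0 ≤ t then t ^ (c - 1) / Real.Gamma c else 0)

lemma rlKernel_of_neg (c : ℝ) {t : ℝ} (ht : t < 0) : rlKernel c t = 0 := by
  simp [rlKernel, ht.not_ge]

lemma rlKernel_of_nonneg (c : ℝ) {t : ℝ} (ht : 0 ≤ t) :
    rlKernel c t = ENNReal.ofReal (t ^ (c - 1) / Real.Gamma c) := by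
  simp [rlKernel, ht]

@[fun_prop]
lemma measurable_rlKernel (c : ℝ) : Measurable (rlKernel c) :=
  (Measurable.ite measurableSet_Ici (by fun_prop) (by fun_prop)).ennreal_ofReal

lemma lintegral_eq_mul_lintegral_comp_mul_left (f : ℝ → ENNReal) (hf : Measurable f) {s : ℝ}
    (hs : 0 < s) : ∫⁻ x, f x = ENNReal.ofReal s * ∫⁻ y, f (s * y) := by
  conv_lhs => rw [← Real.smul_map_volume_mul_left hs.ne', lintegral_smul_measure,
    lintegral_map hf (by fun_prop), abs_of_pos hs, smul_eq_mul]

/-- The kernels `rlKernel` form a convolution semigroup. -/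
lemma lintegral_rlKernel_mul_rlKernel {a b s : ℝ} (ha : 0 < a) (hb : 0 < b) (hs : s ≠ 0) :
    ∫⁻ x, rlKernel a x * rlKernel b (s - x) = rlKernel (b + a) s := by
  rcases hs.lt_or_gt with hs | hs
  · rw [rlKernel_of_neg _ hs]
    refine lintegral_eq_zero_of_ae_eq_zero <| .of_forall fun x => ?_
    rcases lt_or_ge x 0 with hx | hx
    · simp [rlKernel_of_neg _ hx]
    · simp [rlKernel_of_neg b (show s - x < 0 by linarith)]
  · have hGa := Real.Gamma_pos_of_pos ha
    have hGb := Real.Gamma_pos_of_pos hb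
    have hGab := Real.Gamma_pos_of_pos (add_pos ha hb)
    rw [lintegral_eq_mul_lintegral_comp_mul_left _ (by fun_prop) hs,
      ← lintegral_const_mul _ (by fun_prop)]
    have key : ∀ᵐ y : ℝ, ENNReal.ofReal s * (rlKernel a (s * y) * rlKernel b (s - s * y)) =
        rlKernel (b + a) s * ProbabilityTheory.betaPDF a b y := by
      filter_upwards [Measure.ae_ne volume 0, Measure.ae_ne volume 1] with y hy0 hy1
      rcases hy0.lt_or_gt with h0 | h0
      · rw [ProbabilityTheory.betaPDF_eq_zero_of_nonpos h0.le,
          rlKernel_of_neg _ (mul_neg_of_pos_of_neg hs h0)]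
        simp
      rcases hy1.lt_or_gt with h1 | h1
      · have h2 : 0 < s - s * y := by nlinarith
        rw [ProbabilityTheory.betaPDF_of_pos_lt_one h0 h1, rlKernel_of_nonneg _ (by positivity),
          rlKernel_of_nonneg _ h2.le, rlKernel_of_nonneg _ hs.le,
          ← ENNReal.ofReal_mul (by positivity), ← ENNReal.ofReal_mul (by positivity),
          ← ENNReal.ofReal_mul (by rw [add_comm]; positivity)]
        congr 1
        rw [show s - s * y = s * (1 - y) by ring, Real.mul_rpow hs.le h0.le,
          Real.mul_rpow hs.le (by linarith), ProbabilityTheory.beta,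
          show b + a - 1 = 1 + ((a - 1) + (b - 1)) by ring, Real.rpow_add hs, Real.rpow_add hs,
          Real.rpow_one, add_comm b a]
        field_simp
      · rw [ProbabilityTheory.betaPDF_eq_zero_of_one_le h1.le,
          rlKernel_of_neg b (show s - s * y < 0 by nlinarith)]
        simp
    rw [lintegral_congr_ae key, lintegral_const_mul' _ _ (by simp [rlKernel]),
      ProbabilityTheory.lintegral_betaPDF_eq_one ha hb, mul_one]

lemma lintegral_prod_rlKernel {n : ℕ} (c : Fin n → ℝ) (hc : ∀ i, 0 < c i) {b s : ℝ}
    (hb : 0 < b) (hs : s ≠ 0) :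
    ∫⁻ x : Fin n → ℝ, (∏ i, rlKernel (c i) (x i)) * rlKernel b (s - ∑ i, x i) =
      rlKernel (b + ∑ i, c i) s := by
  induction n generalizing s with
  | zero => simp [lintegral_unique, volume_pi]
  | succ n ih =>
    have hmp := (volume_preserving_piFinSuccAbove (fun _ : Fin (n + 1) => ℝ) 0).symm
    rw [← hmp.lintegral_comp (by fun_prop), Measure.volume_eq_prod,
      lintegral_prod _ (by fun_prop)]
    have hB : 0 < b + ∑ i : Fin n, c i.succ :=
      add_pos_of_pos_of_nonneg hb (Finset.sum_nonneg fun i _ => (hc _).le)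
    rw [Fin.sum_univ_succ, add_comm (c 0), ← add_assoc,
      ← lintegral_rlKernel_mul_rlKernel (hc 0) hB hs]
    refine lintegral_congr_ae ?_
    filter_upwards [Measure.ae_ne volume s] with t ht
    rw [← ih (fun i => c i.succ) (fun i => hc _) (sub_ne_zero.2 ht.symm),
      ← lintegral_const_mul _ (by fun_prop)]
    refine lintegral_congr fun y => ?_
    simp [MeasurableEquiv.piFinSuccAbove, Fin.prod_univ_succ, Fin.sum_univ_succ, mul_assoc,
      sub_sub]

lemma lift_nonneg {d : ℕ} {x : Fin d → ℝ} (hx : x ∈ Td d) (i : Fin (d + 1)) :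
    0 ≤ lift d x i := by
  refine Fin.lastCases ?_ (fun i => ?_) i
  · simpa [lift] using hx.2
  · simpa [lift] using hx.1 i

lemma Wg_eq_prod_lift {d : ℕ} (γ : ℝ) {x : Fin d → ℝ} (hx : x ∈ Td d) :
    Wg d γ x = ∏ i, lift d x i ^ γ := by
  rw [Real.finsetProd_rpow _ _ (fun i _ => lift_nonneg hx i), Fin.prod_univ_castSucc]
  simp [Wg, lift]

lemma pow_mul_rpow_eq_rpow_add {γ t : ℝ} (hγ : -1 < γ) (ht : 0 ≤ t) (k : ℕ) :
    t ^ k * t ^ γ = t ^ (k + γ) := by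
  rcases k.eq_zero_or_pos with rfl | hk
  · simp
  · have hk' : (1 : ℝ) ≤ k := by exact_mod_cast hk
    rw [mul_comm, add_comm, Real.rpow_add_natCast' ht (by linarith)]

lemma rlKernel_prod_eq {d : ℕ} (c : Fin (d + 1) → ℝ) (x : Fin d → ℝ) :
    (∏ i : Fin d, rlKernel (c i.castSucc) (x i)) * rlKernel (c (Fin.last d)) (1 - ∑ i, x i) =
      ∏ i, rlKernel (c i) (lift d x i) := by
  rw [Fin.prod_univ_castSucc]
  simp [lift]

lemma indicator_Td_eq {d : ℕ} {γ : ℝ} (hγ : -1 < γ) (k : Fin (d + 1) → ℕ) (x : Fin d → ℝ) :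
    (Td d).indicator (fun x => (∏ i, lift d x i ^ k i) * Wg d γ x) x =
      (∏ i, Real.Gamma (k i + γ + 1)) *
        (∏ i, rlKernel (k i + γ + 1) (lift d x i)).toReal := by
  have hG : ∀ i, 0 < Real.Gamma (k i + γ + 1) := fun i =>
    Real.Gamma_pos_of_pos (by have := (k i).cast_nonneg (α := ℝ); linarith)
  by_cases hx : x ∈ Td d
  · rw [Set.indicator_of_mem hx, Wg_eq_prod_lift γ hx, ENNReal.toReal_prod,
      ← Finset.prod_mul_distrib, ← Finset.prod_mul_distrib]
    refine Finset.prod_congr rfl fun i _ => ?_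
    have hy := lift_nonneg hx i
    have hGi := hG i
    rw [pow_mul_rpow_eq_rpow_add hγ hy, rlKernel_of_nonneg _ hy,
      ENNReal.toReal_ofReal (by positivity), add_sub_cancel_right]
    field_simp
  · rw [Set.indicator_of_notMem hx]
    obtain ⟨i, hi⟩ : ∃ i, lift d x i < 0 := by
      by_contra! h
      exact hx ⟨fun i => by simpa [lift] using h i.castSucc,
        by simpa [lift] using h (Fin.last d)⟩
    have h0 : ∏ i, rlKernel (k i + γ + 1) (lift d x i) = 0 :=
      Finset.prod_eq_zero (Finset.mem_univ i) (rlKernel_of_neg _ hi)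
    simp [h0]

lemma measurableSet_Td (d : ℕ) : MeasurableSet (Td d) := by
  have h : Td d = (⋂ i, {x : Fin d → ℝ | 0 ≤ x i}) ∩ {x | ∑ i, x i ≤ 1} := by
    ext x
    simp [Td]
  rw [h]
  exact (MeasurableSet.iInter fun i => measurableSet_le (by fun_prop) (by fun_prop)).inter
    (measurableSet_le (by fun_prop) (by fun_prop))

lemma lintegral_prod_rlKernel_lift {d : ℕ} (c : Fin (d + 1) → ℝ) (hc : ∀ i, 0 < c i) :
    ∫⁻ x : Fin d → ℝ, ∏ i, rlKernel (c i) (lift d x i) =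
      ENNReal.ofReal (1 / Real.Gamma (∑ i, c i)) := by
  simp_rw [← rlKernel_prod_eq]
  rw [lintegral_prod_rlKernel _ (fun i => hc _) (hc _) one_ne_zero,
    rlKernel_of_nonneg _ zero_le_one, Real.one_rpow, Fin.sum_univ_castSucc, add_comm]

lemma measurable_prod_rlKernel_lift {d : ℕ} (c : Fin (d + 1) → ℝ) :
    Measurable fun x : Fin d → ℝ => ∏ i, rlKernel (c i) (lift d x i) := by
  simp_rw [← rlKernel_prod_eq]
  fun_prop

lemma integrableOn_prod_pow_mul_Wg {d : ℕ} {γ : ℝ} (hγ : -1 < γ) (k : Fin (d + 1) → ℕ) :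
    IntegrableOn (fun x => (∏ i, lift d x i ^ k i) * Wg d γ x) (Td d) := by
  have hc : ∀ i, 0 < (k i : ℝ) + γ + 1 := fun i => by
    have := (k i).cast_nonneg (α := ℝ); linarith
  rw [← integrable_indicator_iff (measurableSet_Td d), funext (indicator_Td_eq hγ k)]
  refine (integrable_toReal_of_lintegral_ne_top
    (measurable_prod_rlKernel_lift _).aemeasurable ?_).const_mul _
  rw [lintegral_prod_rlKernel_lift _ hc]
  exact ENNReal.ofReal_ne_top

/-- Dirichlet's integral for monomials in homogeneous coordinates. -/
lemma integral_prod_pow_mul_Wg {d : ℕ} {γ : ℝ} (hγ : -1 < γ) (k : Fin (d + 1) → ℕ) :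
    ∫ x in Td d, (∏ i, lift d x i ^ k i) * Wg d γ x =
      (∏ i, Real.Gamma (k i + γ + 1)) / Real.Gamma (∑ i, ((k i : ℝ) + γ + 1)) := by
  have hc : ∀ i, 0 < (k i : ℝ) + γ + 1 := fun i => by
    have := (k i).cast_nonneg (α := ℝ); linarith
  have hS := Real.Gamma_pos_of_pos (Finset.sum_pos (fun i _ => hc i) Finset.univ_nonempty)
  have hfin := lintegral_prod_rlKernel_lift _ hc
  rw [← integral_indicator (measurableSet_Td d), funext (indicator_Td_eq hγ k),
    integral_const_mul, integral_toReal (measurable_prod_rlKernel_lift _).aemeasurable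
      (ae_lt_top (measurable_prod_rlKernel_lift _) (by rw [hfin]; exact ENNReal.ofReal_ne_top)),
    hfin, ENNReal.toReal_ofReal (by positivity), mul_one_div]

lemma Gamma_add_natCast_eq_prod_range {c : ℝ} (hc : 0 < c) (m : ℕ) :
    Real.Gamma (c + m) = (∏ t ∈ Finset.range m, (c + t)) * Real.Gamma c := by
  induction m with
  | zero => simp
  | succ m ih =>
    rw [Nat.cast_succ, ← add_assoc, Real.Gamma_add_one (by positivity), ih,
      Finset.prod_range_succ]
    ring

section PairMoments

variable {d : ℕ} {i j : Fin (d + 1)}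

lemma prod_pow_add_single (y : Fin (d + 1) → ℝ) (k : Fin (d + 1) → ℕ) (m n : ℕ) :
    ∏ l, y l ^ (k + Pi.single i m + Pi.single j n : Fin (d + 1) → ℕ) l =
      y i ^ m * y j ^ n * ∏ l, y l ^ k l := by
  have h : ∀ (i : Fin (d + 1)) (m : ℕ),
      ∏ l, y l ^ (Pi.single i m : Fin (d + 1) → ℕ) l = y i ^ m := fun i m => by
    rw [Finset.prod_eq_single i (fun l _ hl => by simp [hl]) (by simp)]
    simp
  simp only [Pi.add_apply, pow_add, Finset.prod_mul_distrib, h]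
  ring

lemma prod_Gamma_add_single (hij : i ≠ j) {c : Fin (d + 1) → ℝ} (hc : ∀ l, 0 < c l) (m n : ℕ) :
    ∏ l, Real.Gamma (c l + (Pi.single i m + Pi.single j n : Fin (d + 1) → ℕ) l) =
      ((∏ t ∈ Finset.range m, (c i + t)) * ∏ t ∈ Finset.range n, (c j + t)) *
        ∏ l, Real.Gamma (c l) := by
  simp_rw [Gamma_add_natCast_eq_prod_range (hc _)]
  rw [Finset.prod_mul_distrib, Finset.prod_eq_mul i j hij (fun l _ hl => by simp [hl.1, hl.2])
    (by simp) (by simp)]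
  simp [hij, hij.symm]

lemma integrableOn_pow_mul_pow_mul {γ : ℝ} (hγ : -1 < γ) (k : Fin (d + 1) → ℕ) (m n : ℕ) :
    IntegrableOn (fun x => lift d x i ^ m * lift d x j ^ n *
      ((∏ l, lift d x l ^ k l) * Wg d γ x)) (Td d) := by
  have h := integrableOn_prod_pow_mul_Wg hγ (k + Pi.single i m + Pi.single j n)
  simp only [prod_pow_add_single] at h
  simpa only [mul_assoc] using h

lemma integral_pow_mul_pow_mul (hij : i ≠ j) {γ : ℝ} (hγ : -1 < γ) (k : Fin (d + 1) → ℕ)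
    (m n : ℕ) :
    ∫ x in Td d, lift d x i ^ m * lift d x j ^ n * ((∏ l, lift d x l ^ k l) * Wg d γ x) =
      ((∏ t ∈ Finset.range m, (k i + γ + 1 + t)) * ∏ t ∈ Finset.range n, (k j + γ + 1 + t)) *
        ((∏ l, Real.Gamma (k l + γ + 1)) /
          Real.Gamma (∑ l, ((k l : ℝ) + γ + 1) + (m + n : ℕ))) := by
  have hc : ∀ i, 0 < (k i : ℝ) + γ + 1 := fun i => by
    have := (k i).cast_nonneg (α := ℝ); linarith
  have h := integral_prod_pow_mul_Wg hγ (k + Pi.single i m + Pi.single j n)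
  have hsplit : ∀ l, (((k + Pi.single i m + Pi.single j n : Fin (d + 1) → ℕ) l : ℕ) : ℝ) + γ + 1 =
      ((k l : ℝ) + γ + 1) + ((Pi.single i m + Pi.single j n : Fin (d + 1) → ℕ) l : ℕ) := by
    intro l
    simp only [Pi.add_apply]
    push_cast
    ring
  have hs : ∑ l, (Pi.single i m + Pi.single j n : Fin (d + 1) → ℕ) l = m + n := by
    simp [Finset.sum_add_distrib]
  simp only [prod_pow_add_single, hsplit] at h
  rw [prod_Gamma_add_single hij hc, Finset.sum_add_distrib, ← Nat.cast_sum, hs] at h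
  simpa only [mul_assoc, mul_div_assoc] using h

/-- The degree 4 Jacobi polynomial for the weight `(st) ^ γ`, in homogeneous form. -/
noncomputable def jacobiFour (γ s t : ℝ) : ℝ :=
  s ^ 4 + t ^ 4 + -(4 * (γ + 4)) / (γ + 1) * (s ^ 3 * t + s * t ^ 3) +
    6 * (γ + 3) * (γ + 4) / ((γ + 1) * (γ + 2)) * (s ^ 2 * t ^ 2)

lemma jacobiFour_moment_eq_zero {γ : ℝ} (hγ : -1 < γ) {p q : ℕ} (h : p + q ≤ 3) :
    ((∏ t ∈ Finset.range 4, ((p : ℝ) + γ + 1 + t)) + ∏ t ∈ Finset.range 4, ((q : ℝ) + γ + 1 + t)) +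
      -(4 * (γ + 4)) / (γ + 1) *
        ((∏ t ∈ Finset.range 3, ((p : ℝ) + γ + 1 + t)) * (q + γ + 1) +
          (p + γ + 1) * ∏ t ∈ Finset.range 3, ((q : ℝ) + γ + 1 + t)) +
      6 * (γ + 3) * (γ + 4) / ((γ + 1) * (γ + 2)) *
        ((∏ t ∈ Finset.range 2, ((p : ℝ) + γ + 1 + t)) *
          ∏ t ∈ Finset.range 2, ((q : ℝ) + γ + 1 + t)) = 0 := by
  have h1 : γ + 1 ≠ 0 := by linarith
  have h2 : γ + 2 ≠ 0 := by linarith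
  have hp : p ≤ 3 := by omega
  have hq : q ≤ 3 := by omega
  simp only [Finset.prod_range_succ, Finset.prod_range_zero]
  interval_cases p <;> interval_cases q <;> first | omega | (push_cast; field_simp; ring)

lemma jacobiFour_mul (γ s t w : ℝ) :
    jacobiFour γ s t * w = s ^ 4 * t ^ 0 * w + s ^ 0 * t ^ 4 * w +
      -(4 * (γ + 4)) / (γ + 1) * (s ^ 3 * t ^ 1 * w + s ^ 1 * t ^ 3 * w) +
      6 * (γ + 3) * (γ + 4) / ((γ + 1) * (γ + 2)) * (s ^ 2 * t ^ 2 * w) := by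
  rw [jacobiFour]
  ring

lemma integrableOn_jacobiFour_mul {γ : ℝ} (hγ : -1 < γ) (k : Fin (d + 1) → ℕ) :
    IntegrableOn (fun x => jacobiFour γ (lift d x i) (lift d x j) *
      ((∏ l, lift d x l ^ k l) * Wg d γ x)) (Td d) := by
  have hI := integrableOn_pow_mul_pow_mul (i := i) (j := j) hγ k
  simp only [jacobiFour_mul]
  exact (((hI 4 0).add (hI 0 4)).add (((hI 3 1).add (hI 1 3)).const_mul _)).add
    ((hI 2 2).const_mul _)

lemma integral_jacobiFour_mul_eq_zero (hij : i ≠ j) {γ : ℝ} (hγ : -1 < γ)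
    {k : Fin (d + 1) → ℕ} (hk : ∑ l, k l ≤ 3) :
    ∫ x in Td d, jacobiFour γ (lift d x i) (lift d x j) *
      ((∏ l, lift d x l ^ k l) * Wg d γ x) = 0 := by
  have hI := integrableOn_pow_mul_pow_mul (i := i) (j := j) hγ k
  have hk' : k i + k j ≤ 3 := by
    rw [← Finset.sum_pair hij]
    exact (Finset.sum_le_sum_of_subset (Finset.subset_univ _)).trans hk
  simp only [jacobiFour_mul]
  rw [integral_add, integral_add, integral_add (hI 4 0) (hI 0 4), integral_const_mul, integral_add (hI 3 1) (hI 1 3),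
    integral_const_mul]
  rotate_left
  · exact (hI 4 0).add (hI 0 4)
  · exact ((hI 3 1).add (hI 1 3)).const_mul _
  · exact ((hI 4 0).add (hI 0 4)).add (((hI 3 1).add (hI 1 3)).const_mul _)
  · exact (hI 2 2).const_mul _
  simp only [integral_pow_mul_pow_mul hij hγ]
  have h := jacobiFour_moment_eq_zero hγ hk'
  have h' := congrArg (· * ((∏ l, Real.Gamma (k l + γ + 1)) /
          Real.Gamma (∑ l, ((k l : ℝ) + γ + 1) + (4 : ℕ)))) h
  simp only [zero_mul] at h'
  rw [← h']
  simp only [Finset.prod_range_zero, Finset.prod_range_one, Nat.cast_zero, add_zero, zero_add,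
    Nat.reduceAdd]
  ring

end PairMoments

section OffDiagonalSums

variable {n : ℕ}

lemma sum_sum_ne_comm (f : Fin n → Fin n → ℝ) :
    ∑ i, ∑ j ∈ Finset.univ.filter (fun j => j ≠ i), f j i =
      ∑ i, ∑ j ∈ Finset.univ.filter (fun j => j ≠ i), f i j := by
  simp only [Finset.sum_filter]
  rw [Finset.sum_comm]
  simp only [ne_comm]

lemma sum_sum_ne_eq_two_mul_sum_sum_lt {f : Fin n → Fin n → ℝ} (hf : ∀ i j, f i j = f j i) :
    ∑ i, ∑ j ∈ Finset.univ.filter (fun j => j ≠ i), f i j =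
      2 * ∑ i, ∑ j ∈ Finset.univ.filter (fun j => i < j), f i j := by
  have h : ∑ i, ∑ j ∈ Finset.univ.filter (fun j => j < i), f i j =
      ∑ i, ∑ j ∈ Finset.univ.filter (fun j => i < j), f i j := by
    simp only [Finset.sum_filter]
    rw [Finset.sum_comm]
    simp only [hf]
  rw [two_mul]
  nth_rewrite 2 [← h]
  rw [← Finset.sum_add_distrib]
  refine Finset.sum_congr rfl fun i _ => ?_
  simp only [Finset.sum_filter]
  rw [← Finset.sum_add_distrib]
  refine Finset.sum_congr rfl fun j _ => ?_
  rcases lt_trichotomy i j with h | rfl | h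
  · simp [h, h.ne', h.not_gt]
  · simp
  · simp [h, h.ne, h.not_gt]

lemma sum_sum_ne_const (f : Fin (n + 1) → ℝ) :
    ∑ i, ∑ _j ∈ Finset.univ.filter (fun j => j ≠ i), f i = n * ∑ i, f i := by
  simp [Finset.filter_ne', Finset.mul_sum]

end OffDiagonalSums

lemma P4eval_eq_sum_jacobiFour {d : ℕ} (hd : 1 ≤ d) {γ a b : ℝ}
    (ha : a = -(4 * (γ + 4)) / (d * (γ + 1)))
    (hb : b = 6 * (γ + 3) * (γ + 4) / (d * (γ + 1) * (γ + 2))) (y : Fin (d + 1) → ℝ) :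
    P4eval d a b y = 1 / (2 * d) *
      ∑ i, ∑ j ∈ Finset.univ.filter (fun j => j ≠ i), jacobiFour γ (y i) (y j) := by
  have hd' : (d : ℝ) ≠ 0 := by positivity
  simp only [jacobiFour, Finset.sum_add_distrib,
    ← Finset.mul_sum _ _ (-(4 * (γ + 4)) / (γ + 1)),
    ← Finset.mul_sum _ _ (6 * (γ + 3) * (γ + 4) / ((γ + 1) * (γ + 2)))]
  rw [sum_sum_ne_comm (fun i _ => y i ^ 4), sum_sum_ne_const (fun i => y i ^ 4),
    sum_sum_ne_eq_two_mul_sum_sum_lt (f := fun i j => y i ^ 2 * y j ^ 2) (fun i j => mul_comm _ _)]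
  have h := sum_sum_ne_comm (fun i j => y i ^ 3 * y j)
  simp only [mul_comm (_ ^ 3)] at h
  simp only [P4eval, mul_comm (_ ^ 3)]
  rw [h]
  rw [show a = 1 / d * (-(4 * (γ + 4)) / (γ + 1)) by rw [ha]; field_simp,
    show b = 1 / d * (6 * (γ + 3) * (γ + 4) / ((γ + 1) * (γ + 2))) by rw [hb]; field_simp]
  field_simp
  ring

lemma P4eval_mul_eval_mul_Wg {d : ℕ} (hd : 1 ≤ d) {γ a b : ℝ}
    (ha : a = -(4 * (γ + 4)) / (d * (γ + 1)))
    (hb : b = 6 * (γ + 3) * (γ + 4) / (d * (γ + 1) * (γ + 2))) (q : MvPolynomial (Fin d) ℝ)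
    (x : Fin d → ℝ) :
    P4eval d a b (lift d x) * MvPolynomial.eval x q * Wg d γ x =
      ∑ s ∈ q.support, ∑ i, ∑ j ∈ Finset.univ.filter (fun j => j ≠ i),
        1 / (2 * d) * q.coeff s * (jacobiFour γ (lift d x i) (lift d x j) *
          ((∏ l, lift d x l ^ (Fin.snoc s 0 : Fin (d + 1) → ℕ) l) * Wg d γ x)) := by
  have h : ∀ s : Fin d →₀ ℕ, ∏ l, lift d x l ^ (Fin.snoc s 0 : Fin (d + 1) → ℕ) l =
      ∏ l, x l ^ s l := fun s => by
    rw [Fin.prod_univ_castSucc]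
    simp [lift]
  rw [P4eval_eq_sum_jacobiFour hd ha hb, MvPolynomial.eval_eq', Finset.mul_sum, Finset.sum_mul]
  refine Finset.sum_congr rfl fun s _ => ?_
  simp only [h, ← Finset.mul_sum, ← Finset.sum_mul]
  ring

/-- For the stated `a`, `b`, `P_4` is orthogonal to all polynomials of degree at most `3`
with respect to `W_γ` on `T^d`. -/
theorem P4_orthogonal
    (d : ℕ) (hd : 1 ≤ d) (γ : ℝ) (hγ : -1 < γ) (a b : ℝ)
    (ha : a = -(4 * (γ + 4)) / (d * (γ + 1)))
    (hb : b = 6 * (γ + 3) * (γ + 4) / (d * (γ + 1) * (γ + 2))) :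
    ∀ q : MvPolynomial (Fin d) ℝ, q.totalDegree ≤ 3 →
      ∫ x in Td d, P4eval d a b (lift d x) * MvPolynomial.eval x q * Wg d γ x = 0 := by
  intro q hq
  simp only [P4eval_mul_eval_mul_Wg hd ha hb q]
  have hI : ∀ (s : Fin d →₀ ℕ) (i j : Fin (d + 1)), IntegrableOn (fun x =>
      1 / (2 * d) * q.coeff s * (jacobiFour γ (lift d x i) (lift d x j) *
        ((∏ l, lift d x l ^ (Fin.snoc s 0 : Fin (d + 1) → ℕ) l) * Wg d γ x))) (Td d) :=
    fun s i j => (integrableOn_jacobiFour_mul hγ _).const_mul _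
  rw [integral_finsetSum _ fun s _ => integrable_finsetSum _ fun i _ =>
    integrable_finsetSum _ fun j _ => hI s i j]
  refine Finset.sum_eq_zero fun s hs => ?_
  rw [integral_finsetSum _ fun i _ => integrable_finsetSum _ fun j _ => hI s i j]
  refine Finset.sum_eq_zero fun i _ => ?_
  rw [integral_finsetSum _ fun j _ => hI s i j]
  refine Finset.sum_eq_zero fun j hj => ?_
  rw [integral_const_mul, integral_jacobiFour_mul_eq_zero (Finset.mem_filter.1 hj).2.symm hγ,
    mul_zero]
  rw [Fin.sum_univ_castSucc]
  have hdeg := (MvPolynomial.le_totalDegree hs).trans hq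
  rw [Finsupp.sum_fintype _ _ (fun _ => rfl)] at hdeg
  simpa using hdeg
end

section
/- Let d ≥ 4, γ > −1, 2 ≤ p ≤ d, and let k_1,…,k_5 be distinct integers in {1,…,d+1}. Assume m_{(3,1,1)} ≠ m_{(2,2,1)}, set a = ((p−1)/2)·(m_{(4,1)} − m_{(3,2)})/(m_{(3,1,1)} − m_{(2,2,1)}) − 1, assume a > 0 and a ≠ 1, and set A_6 = (m_{(4,1)} − m_{(3,2)}) / (p·a(a−1)²(a+1)). Let A_1,…,A_5 ∈ ℝ. If Σ_{j=1}^5 A_j S_ℓ(v_{k_j}) + A_6 S_ℓ(u_{a,p}) = m_ℓ holds for the five partitions ℓ = (5), (4,1), (3,1,1), (2,1,1,1), (1,1,1,1,1), then it also holds for ℓ = (3,2) and ℓ = (2,2,1), and consequently w_γ ∫_{𝒯^{d+1}} f(ξ) ξ^γ dξ = Σ_{j=1}^5 A_j · avg_{v_{k_j}𝒜_d} f + A_6 · avg_{u_{a,p}𝒜_d} f for every homogeneous polynomial f of degree 5 in d+1 variables. -/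
open MeasureTheory Finset

/-- Evaluation of the monomial symmetric polynomial with exponent vector `lv`:
the sum of all distinct monomials whose exponent vector is a permutation of `lv`. -/
noncomputable def msymmEval (d : ℕ) (lv : Fin (d + 1) → ℕ) (x : Fin (d + 1) → ℝ) : ℝ :=
  ∑ β ∈ Finset.image (fun σ : Equiv.Perm (Fin (d + 1)) => lv ∘ σ) Finset.univ,
    ∏ i, x i ^ β i

/-- Pad a list of exponents (a partition) into an exponent vector in `d+1` variables. -/
def pvec (d : ℕ) (l : List ℕ) : Fin (d + 1) → ℕ :=
  fun i => l.getD (i : ℕ) 0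

/-- The moment `m_ℓ := w_γ ∫_{𝒯^{d+1}} S_ℓ(ξ) ξ^γ dξ`. -/
noncomputable def momentS (d : ℕ) (γ : ℝ) (lv : Fin (d + 1) → ℕ) : ℝ :=
  wg d γ * ∫ x in Td d, msymmEval d lv (lift d x) * Wg d γ x

/-- The average of `f` over the set of distinct coordinate permutations of `y`. -/
noncomputable def orbitAvg (d : ℕ) (y : Fin (d + 1) → ℝ) (f : (Fin (d + 1) → ℝ) → ℝ) : ℝ :=
  ((Finset.image (fun σ : Equiv.Perm (Fin (d + 1)) => y ∘ σ) Finset.univ).card : ℝ)⁻¹ *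
    ∑ z ∈ Finset.image (fun σ : Equiv.Perm (Fin (d + 1)) => y ∘ σ) Finset.univ, f z

/-- `v_k = (1,…,1,0,…,0)` with `k` ones, in `d+1` coordinates. -/
def vk (d k : ℕ) : Fin (d + 1) → ℝ :=
  fun i => if (i : ℕ) < k then 1 else 0

/-- `u_{a,p} = (a,1,…,1,0,…,0)` with one entry `a` followed by `p` ones. -/
def uap (d : ℕ) (a : ℝ) (p : ℕ) : Fin (d + 1) → ℝ :=
  fun i => if (i : ℕ) = 0 then a else if (i : ℕ) ≤ p then 1 else 0

/-- The linear part of the action of a coordinate permutation on the simplex, through the embedding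
of `ℝ^d` as the hyperplane of vectors with vanishing coordinate sum. -/
noncomputable def simplexPermLinear (d : ℕ) (σ : Equiv.Perm (Fin (d + 1))) :
    (Fin d → ℝ) →ₗ[ℝ] (Fin d → ℝ) where
  toFun x := fun i => (Fin.snoc x (-∑ i, x i) : Fin (d + 1) → ℝ) (σ i.castSucc)
  map_add' x y := by
    ext i
    simp only [Pi.add_apply]
    generalize σ i.castSucc = k
    refine Fin.lastCases ?_ (fun j => ?_) k
    · simp [Finset.sum_add_distrib, add_comm]
    · simp
  map_smul' c x := by
    ext i
    simp only [Pi.smul_apply]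
    generalize σ i.castSucc = k
    refine Fin.lastCases ?_ (fun j => ?_) k
    · simp [Finset.mul_sum]
    · simp

/-- The action of a coordinate permutation on the simplex, read in the first `d` coordinates. -/
noncomputable def simplexPerm (d : ℕ) (σ : Equiv.Perm (Fin (d + 1))) (x : Fin d → ℝ) :
    Fin d → ℝ :=
  fun i => lift d x (σ i.castSucc)

lemma sum_lift (d : ℕ) (x : Fin d → ℝ) : ∑ i, lift d x i = 1 := by
  simp [lift, Fin.sum_univ_castSucc]

lemma snoc_eq_of_sum_eq {d : ℕ} {y : Fin (d + 1) → ℝ} {c : ℝ} (h : ∑ i, y i = c) :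
    (Fin.snoc (fun i : Fin d => y i.castSucc) (c - ∑ i : Fin d, y i.castSucc) :
      Fin (d + 1) → ℝ) = y := by
  ext i
  refine Fin.lastCases ?_ (fun j => ?_) i
  · rw [Fin.sum_univ_castSucc] at h
    simp [← h]
  · simp

lemma lift_simplexPerm (d : ℕ) (σ : Equiv.Perm (Fin (d + 1))) (x : Fin d → ℝ) :
    lift d (simplexPerm d σ x) = lift d x ∘ σ :=
  snoc_eq_of_sum_eq (y := lift d x ∘ σ) <| by
    rw [← sum_lift d x]
    exact Equiv.sum_comp σ (lift d x)

lemma lift_castSucc (d : ℕ) (x : Fin d → ℝ) (i : Fin d) : lift d x i.castSucc = x i := by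
  simp [lift]

lemma lift_last (d : ℕ) (x : Fin d → ℝ) : lift d x (Fin.last d) = 1 - ∑ i, x i := by
  simp [lift]

lemma lift_injective (d : ℕ) : Function.Injective (lift d) := fun x y h => by
  ext i
  rw [← lift_castSucc d x, h, lift_castSucc]

lemma continuous_lift (d : ℕ) : Continuous (lift d) := by
  refine continuous_pi fun i => Fin.lastCases ?_ (fun j => ?_) i
  · simp only [lift_last]
    fun_prop
  · simp only [lift_castSucc]
    fun_prop

lemma simplexPermLinear_comp (d : ℕ) (σ τ : Equiv.Perm (Fin (d + 1))) :
    simplexPermLinear d σ ∘ₗ simplexPermLinear d τ = simplexPermLinear d (τ * σ) := by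
  refine LinearMap.ext fun x => funext fun i => ?_
  have h : ∑ i, ((Fin.snoc x (-∑ i, x i) : Fin (d + 1) → ℝ) ∘ τ) i = 0 := by
    rw [show (0 : ℝ) = ∑ i, (Fin.snoc x (-∑ i, x i) : Fin (d + 1) → ℝ) i by
      simp [Fin.sum_univ_castSucc]]
    exact Equiv.sum_comp τ (Fin.snoc x (-∑ i, x i) : Fin (d + 1) → ℝ)
  have := congrFun (snoc_eq_of_sum_eq h) (σ i.castSucc)
  rw [zero_sub] at this
  exact this

lemma simplexPermLinear_one (d : ℕ) : simplexPermLinear d 1 = LinearMap.id := by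
  refine LinearMap.ext fun x => funext fun i => ?_
  simp [simplexPermLinear]

lemma simplexPermLinear_pow (d : ℕ) (σ : Equiv.Perm (Fin (d + 1))) (n : ℕ) :
    simplexPermLinear d σ ^ n = simplexPermLinear d (σ ^ n) := by
  induction n with
  | zero => exact (simplexPermLinear_one d).symm
  | succ n ih =>
    rw [pow_succ, ih, pow_succ', ← simplexPermLinear_comp]
    rfl

lemma abs_det_simplexPermLinear (d : ℕ) (σ : Equiv.Perm (Fin (d + 1))) :
    |LinearMap.det (simplexPermLinear d σ)| = 1 := by
  have h : LinearMap.det (simplexPermLinear d σ) ^ orderOf σ = 1 := by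
    rw [← map_pow, simplexPermLinear_pow, pow_orderOf_eq_one, simplexPermLinear_one,
      LinearMap.det_id]
  rw [← pow_eq_one_iff_of_nonneg (abs_nonneg _) (orderOf_pos σ).ne', ← abs_pow, h, abs_one]

lemma simplexPerm_eq_add (d : ℕ) (σ : Equiv.Perm (Fin (d + 1))) (x : Fin d → ℝ) :
    simplexPerm d σ x = simplexPerm d σ 0 + simplexPermLinear d σ x := by
  ext i
  simp only [simplexPerm, simplexPermLinear, LinearMap.coe_mk, AddHom.coe_mk, Pi.add_apply]
  refine Fin.lastCases ?_ (fun j => ?_) (σ i.castSucc)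
  · simp [lift_last, sub_eq_add_neg]
  · simp [lift_castSucc]

lemma measurePreserving_simplexPerm (d : ℕ) (σ : Equiv.Perm (Fin (d + 1))) :
    MeasurePreserving (simplexPerm d σ) := by
  have hdet := abs_det_simplexPermLinear d σ
  have hne : LinearMap.det (simplexPermLinear d σ) ≠ 0 := by
    intro h
    simp [h] at hdet
  have hlin : MeasurePreserving (simplexPermLinear d σ) := by
    refine ⟨(LinearMap.continuous_of_finiteDimensional _).measurable, ?_⟩
    rw [Real.map_linearMap_volume_pi_eq_smul_volume_pi hne, abs_inv, hdet]
    simp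
  rw [show simplexPerm d σ = (simplexPerm d σ 0 + ·) ∘ simplexPermLinear d σ from
    funext (simplexPerm_eq_add d σ)]
  exact (measurePreserving_add_left volume (simplexPerm d σ 0)).comp hlin

lemma measurableEmbedding_simplexPerm (d : ℕ) (σ : Equiv.Perm (Fin (d + 1))) :
    MeasurableEmbedding (simplexPerm d σ) := by
  refine Continuous.measurableEmbedding ?_ fun x y h => lift_injective d ?_
  · exact continuous_pi fun i => (continuous_apply _).comp (continuous_lift d)
  · have := congrArg (lift d) h
    rw [lift_simplexPerm, lift_simplexPerm] at this
    exact σ.surjective.injective_comp_right this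

lemma mem_Td_iff (d : ℕ) (x : Fin d → ℝ) : x ∈ Td d ↔ ∀ i, 0 ≤ lift d x i := by
  simp [Td, Fin.forall_fin_succ', lift_castSucc, lift_last]

lemma simplexPerm_mem_Td (d : ℕ) (σ : Equiv.Perm (Fin (d + 1))) (x : Fin d → ℝ) :
    simplexPerm d σ x ∈ Td d ↔ x ∈ Td d := by
  rw [mem_Td_iff, mem_Td_iff, lift_simplexPerm]
  exact (σ.surjective.forall (p := fun i => 0 ≤ lift d x i)).symm

lemma Wg_eq (d : ℕ) (γ : ℝ) (x : Fin d → ℝ) : Wg d γ x = (∏ i, lift d x i) ^ γ := by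
  simp [Wg, Fin.prod_univ_castSucc, lift_castSucc, lift_last]

lemma Wg_simplexPerm (d : ℕ) (γ : ℝ) (σ : Equiv.Perm (Fin (d + 1))) (x : Fin d → ℝ) :
    Wg d γ (simplexPerm d σ x) = Wg d γ x := by
  rw [Wg_eq, Wg_eq, lift_simplexPerm]
  exact congrArg (· ^ γ) (Equiv.prod_comp σ (lift d x))

lemma setIntegral_comp_perm (d : ℕ) (γ : ℝ) (σ : Equiv.Perm (Fin (d + 1)))
    (g : (Fin (d + 1) → ℝ) → ℝ) :
    ∫ x in Td d, g (lift d x ∘ σ) * Wg d γ x = ∫ x in Td d, g (lift d x) * Wg d γ x := by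
  rw [← (measurePreserving_simplexPerm d σ).setIntegral_preimage_emb
    (measurableEmbedding_simplexPerm d σ) (fun x => g (lift d x) * Wg d γ x)]
  rw [show simplexPerm d σ ⁻¹' Td d = Td d from Set.ext (simplexPerm_mem_Td d σ)]
  simp only [lift_simplexPerm, Wg_simplexPerm]

lemma isCompact_Td (d : ℕ) : IsCompact (Td d) := by
  have hc : IsClosed (Td d) := by
    have : Td d = ⋂ i, (fun x => lift d x i) ⁻¹' Set.Ici 0 := by
      ext x
      simp [mem_Td_iff]
    rw [this]
    exact isClosed_iInter fun i =>
      isClosed_Ici.preimage ((continuous_apply i).comp (continuous_lift d))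
  refine (isCompact_Icc (a := (0 : Fin d → ℝ)) (b := 1)).of_isClosed_subset hc fun x hx => ?_
  exact ⟨hx.1, fun i => (Finset.single_le_sum (fun j _ => hx.1 j) (mem_univ i)).trans hx.2⟩

lemma integrableOn_prod_rpow (d : ℕ) {γ : ℝ} (hγ : -1 < γ) :
    IntegrableOn (fun x : Fin d → ℝ => ∏ i, x i ^ γ) (Set.Icc 0 1) := by
  have h1 : IntegrableOn (fun t : ℝ => t ^ γ) (Set.Icc 0 1) := by
    rw [integrableOn_Icc_iff_integrableOn_Ioc, ← intervalIntegrable_iff_integrableOn_Ioc_of_le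
      zero_le_one]
    exact intervalIntegral.intervalIntegrable_rpow' hγ
  have h := Integrable.fintype_prod (ι := Fin d) (f := fun _ t => t ^ γ)
    (μ := fun _ => volume.restrict (Set.Icc (0 : ℝ) 1)) fun _ => h1
  rwa [← Measure.restrict_pi_pi, ← volume_pi, Set.pi_univ_Icc] at h

lemma integrableOn_Wg_of_le_last (d : ℕ) {γ : ℝ} (hγ : -1 < γ) {ε : ℝ} (hε : 0 < ε) :
    IntegrableOn (Wg d γ) (Td d ∩ {x | ε ≤ lift d x (Fin.last d)}) := by
  have hcont : Continuous fun x => lift d x (Fin.last d) :=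
    (continuous_apply _).comp (continuous_lift d)
  have hK : IsCompact (Td d ∩ {x | ε ≤ lift d x (Fin.last d)}) :=
    (isCompact_Td d).inter_right (isClosed_le continuous_const hcont)
  have h : IntegrableOn (fun x : Fin d → ℝ => ∏ i, x i ^ γ)
      (Td d ∩ {x | ε ≤ lift d x (Fin.last d)}) := by
    refine (integrableOn_prod_rpow d hγ).mono_set fun x hx => ⟨hx.1.1, fun i => ?_⟩
    exact (Finset.single_le_sum (fun j _ => hx.1.1 j) (mem_univ i)).trans hx.1.2
  have hg : ContinuousOn (fun x => lift d x (Fin.last d) ^ γ)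
      (Td d ∩ {x | ε ≤ lift d x (Fin.last d)}) :=
    hcont.continuousOn.rpow_const fun x hx => Or.inl (hε.trans_le hx.2).ne'
  refine (h.continuousOn_mul hg hK).congr_fun (fun x hx => ?_) hK.measurableSet
  have hx0 : ∀ i, 0 ≤ x i := hx.1.1
  simp only [Wg, lift_last]
  rw [Real.mul_rpow (prod_nonneg fun i _ => hx0 i) (sub_nonneg.2 hx.1.2),
    ← Real.finsetProd_rpow _ _ fun i _ => hx0 i, mul_comm]

lemma integrableOn_Wg (d : ℕ) {γ : ℝ} (hγ : -1 < γ) : IntegrableOn (Wg d γ) (Td d) := by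
  have hε : (0 : ℝ) < 1 / (d + 1) := by positivity
  have hcover : Td d ⊆ ⋃ i : Fin (d + 1), Td d ∩ {x | 1 / (d + 1 : ℝ) ≤ lift d x i} := by
    intro x hx
    by_contra hcon
    have hlt : ∀ i, lift d x i < 1 / (d + 1 : ℝ) := fun i => by
      by_contra hi
      exact hcon (Set.mem_iUnion.2 ⟨i, hx, not_lt.1 hi⟩)
    have := Finset.sum_lt_sum_of_nonempty (univ_nonempty (α := Fin (d + 1))) fun i _ => hlt i
    rw [sum_lift] at this
    simp at this
    rw [mul_inv_cancel₀ (by positivity)] at this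
    exact lt_irrefl _ this
  refine IntegrableOn.mono_set (integrableOn_finite_iUnion.2 fun i => ?_) hcover
  set σ : Equiv.Perm (Fin (d + 1)) := Equiv.swap i (Fin.last d) with hσ
  have h := ((measurePreserving_simplexPerm d σ).integrableOn_comp_preimage
    (measurableEmbedding_simplexPerm d σ)).2 (integrableOn_Wg_of_le_last d hγ hε)
  rw [show Wg d γ ∘ simplexPerm d σ = Wg d γ from funext (Wg_simplexPerm d γ σ)] at h
  rwa [show simplexPerm d σ ⁻¹' (Td d ∩ {x | 1 / (d + 1 : ℝ) ≤ lift d x (Fin.last d)}) =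
    Td d ∩ {x | 1 / (d + 1 : ℝ) ≤ lift d x i} by
      ext x
      simp [simplexPerm_mem_Td, lift_simplexPerm, hσ]] at h

lemma integrableOn_comp_lift_mul_Wg (d : ℕ) {γ : ℝ} (hγ : -1 < γ)
    {g : (Fin (d + 1) → ℝ) → ℝ} (hg : Continuous g) :
    IntegrableOn (fun x => g (lift d x) * Wg d γ x) (Td d) :=
  (integrableOn_Wg d hγ).continuousOn_mul (hg.comp (continuous_lift d)).continuousOn
    (isCompact_Td d)

lemma sum_image_perm_comp {α M : Type*} [DecidableEq α] [AddCommMonoid M] {n : ℕ}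
    (y : Fin n → α) (τ : Equiv.Perm (Fin n)) (f : (Fin n → α) → M) :
    ∑ z ∈ Finset.image (fun σ : Equiv.Perm (Fin n) => y ∘ σ) Finset.univ, f (z ∘ τ) =
      ∑ z ∈ Finset.image (fun σ : Equiv.Perm (Fin n) => y ∘ σ) Finset.univ, f z := by
  have hmem : ∀ (ρ : Equiv.Perm (Fin n)),
      ∀ z ∈ Finset.image (fun σ : Equiv.Perm (Fin n) => y ∘ σ) Finset.univ,
      z ∘ ρ ∈ Finset.image (fun σ : Equiv.Perm (Fin n) => y ∘ σ) Finset.univ := by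
    intro ρ z hz
    obtain ⟨σ, -, rfl⟩ := Finset.mem_image.1 hz
    exact Finset.mem_image.2 ⟨σ * ρ, mem_univ _, rfl⟩
  refine Finset.sum_nbij' (· ∘ τ) (· ∘ τ.symm) (hmem τ) (hmem τ.symm) ?_ ?_ fun _ _ => rfl
  · intro z _
    ext i
    simp
  · intro z _
    ext i
    simp

lemma prod_pow_comp_perm {n : ℕ} (x : Fin n → ℝ) (β : Fin n → ℕ) (σ : Equiv.Perm (Fin n)) :
    ∏ i, x i ^ (β ∘ σ) i = ∏ i, (x ∘ σ.symm) i ^ β i := by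
  rw [← Equiv.prod_comp σ fun i => (x ∘ σ.symm) i ^ β i]
  simp

lemma msymmEval_comp_perm (d : ℕ) (lv : Fin (d + 1) → ℕ) (x : Fin (d + 1) → ℝ)
    (τ : Equiv.Perm (Fin (d + 1))) : msymmEval d lv (x ∘ τ) = msymmEval d lv x := by
  unfold msymmEval
  rw [← sum_image_perm_comp lv τ]
  refine Finset.sum_congr rfl fun β _ => ?_
  rw [prod_pow_comp_perm, Function.comp_assoc]
  simp

/-- The orbit sum of values of a permutation-invariant functional on monomials. -/
lemma sum_image_perm_eq_card_mul {n : ℕ} (lv : Fin n → ℕ) (L : (Fin n → ℕ) → ℝ)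
    (hL : ∀ σ : Equiv.Perm (Fin n), L (lv ∘ σ) = L lv) :
    ∑ β ∈ Finset.image (fun σ : Equiv.Perm (Fin n) => lv ∘ σ) Finset.univ, L β =
      (Finset.image (fun σ : Equiv.Perm (Fin n) => lv ∘ σ) Finset.univ).card * L lv := by
  rw [Finset.sum_congr rfl (g := fun _ => L lv), Finset.sum_const, nsmul_eq_mul]
  intro β hβ
  obtain ⟨σ, -, rfl⟩ := Finset.mem_image.1 hβ
  exact hL σ

lemma card_image_perm_ne_zero {α : Type*} [DecidableEq α] {n : ℕ} (y : Fin n → α) :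
    ((Finset.image (fun σ : Equiv.Perm (Fin n) => y ∘ σ) Finset.univ).card : ℝ) ≠ 0 :=
  Nat.cast_ne_zero.2 (Finset.card_pos.2 (univ_nonempty.image _)).ne'

/-- The normalized integral of the monomial with exponent vector `β`. -/
noncomputable def momentMono (d : ℕ) (γ : ℝ) (β : Fin (d + 1) → ℕ) : ℝ :=
  wg d γ * ∫ x in Td d, (∏ i, lift d x i ^ β i) * Wg d γ x

lemma momentMono_comp_perm (d : ℕ) (γ : ℝ) (β : Fin (d + 1) → ℕ)
    (σ : Equiv.Perm (Fin (d + 1))) : momentMono d γ (β ∘ σ) = momentMono d γ β := by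
  unfold momentMono
  simp only [prod_pow_comp_perm]
  rw [setIntegral_comp_perm d γ σ.symm fun y => ∏ i, y i ^ β i]

lemma momentS_eq_card_mul (d : ℕ) {γ : ℝ} (hγ : -1 < γ) (lv : Fin (d + 1) → ℕ) :
    momentS d γ lv =
      (Finset.image (fun σ : Equiv.Perm (Fin (d + 1)) => lv ∘ σ) Finset.univ).card *
        momentMono d γ lv := by
  rw [← sum_image_perm_eq_card_mul lv _ (momentMono_comp_perm d γ lv)]
  unfold momentS momentMono msymmEval
  simp only [Finset.sum_mul]
  rw [integral_finsetSum, Finset.mul_sum]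
  intro β _
  exact integrableOn_comp_lift_mul_Wg d hγ (g := fun y => ∏ i, y i ^ β i) (by fun_prop)

lemma orbitAvg_mono_comp_perm (d : ℕ) (y : Fin (d + 1) → ℝ) (β : Fin (d + 1) → ℕ)
    (σ : Equiv.Perm (Fin (d + 1))) :
    orbitAvg d y (fun z => ∏ i, z i ^ (β ∘ σ) i) = orbitAvg d y (fun z => ∏ i, z i ^ β i) := by
  unfold orbitAvg
  simp only [prod_pow_comp_perm]
  rw [sum_image_perm_comp y σ.symm fun z => ∏ i, z i ^ β i]

lemma orbitAvg_sum {ι : Type*} (d : ℕ) (y : Fin (d + 1) → ℝ) (s : Finset ι)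
    (f : ι → (Fin (d + 1) → ℝ) → ℝ) :
    orbitAvg d y (fun z => ∑ t ∈ s, f t z) = ∑ t ∈ s, orbitAvg d y (f t) := by
  unfold orbitAvg
  rw [Finset.sum_comm, Finset.mul_sum]

lemma orbitAvg_const_mul (d : ℕ) (y : Fin (d + 1) → ℝ) (c : ℝ) (f : (Fin (d + 1) → ℝ) → ℝ) :
    orbitAvg d y (fun z => c * f z) = c * orbitAvg d y f := by
  unfold orbitAvg
  rw [← Finset.mul_sum]
  ring

lemma orbitAvg_msymmEval (d : ℕ) (y : Fin (d + 1) → ℝ) (lv : Fin (d + 1) → ℕ) :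
    orbitAvg d y (msymmEval d lv) = msymmEval d lv y := by
  unfold orbitAvg
  rw [Finset.sum_congr rfl (g := fun _ => msymmEval d lv y), Finset.sum_const, nsmul_eq_mul,
    inv_mul_cancel_left₀ (card_image_perm_ne_zero y)]
  intro z hz
  obtain ⟨σ, -, rfl⟩ := Finset.mem_image.1 hz
  exact msymmEval_comp_perm d lv y σ

lemma msymmEval_eq_card_mul (d : ℕ) (lv : Fin (d + 1) → ℕ) (y : Fin (d + 1) → ℝ) :
    msymmEval d lv y =
      (Finset.image (fun σ : Equiv.Perm (Fin (d + 1)) => lv ∘ σ) Finset.univ).card *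
        orbitAvg d y (fun z => ∏ i, z i ^ lv i) := by
  rw [← sum_image_perm_eq_card_mul lv (fun β => orbitAvg d y fun z => ∏ i, z i ^ β i)
    (orbitAvg_mono_comp_perm d y lv), ← orbitAvg_sum, ← orbitAvg_msymmEval]
  rfl

lemma antitone_five_cases {b₀ b₁ b₂ b₃ b₄ : ℕ} (h₁ : b₁ ≤ b₀) (h₂ : b₂ ≤ b₁) (h₃ : b₃ ≤ b₂)
    (h₄ : b₄ ≤ b₃) (hsum : b₀ + (b₁ + (b₂ + (b₃ + b₄))) = 5) :
    (b₀ = 5 ∧ b₁ = 0 ∧ b₂ = 0 ∧ b₃ = 0 ∧ b₄ = 0) ∨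
      (b₀ = 4 ∧ b₁ = 1 ∧ b₂ = 0 ∧ b₃ = 0 ∧ b₄ = 0) ∨
      (b₀ = 3 ∧ b₁ = 2 ∧ b₂ = 0 ∧ b₃ = 0 ∧ b₄ = 0) ∨
      (b₀ = 3 ∧ b₁ = 1 ∧ b₂ = 1 ∧ b₃ = 0 ∧ b₄ = 0) ∨
      (b₀ = 2 ∧ b₁ = 2 ∧ b₂ = 1 ∧ b₃ = 0 ∧ b₄ = 0) ∨
      (b₀ = 2 ∧ b₁ = 1 ∧ b₂ = 1 ∧ b₃ = 1 ∧ b₄ = 0) ∨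
      (b₀ = 1 ∧ b₁ = 1 ∧ b₂ = 1 ∧ b₃ = 1 ∧ b₄ = 1) := by
  have h₁' : b₁ ≤ 2 := by omega
  have h₂' : b₂ ≤ 1 := by omega
  have h₃' : b₃ ≤ 1 := by omega
  have h₄' : b₄ ≤ 1 := by omega
  interval_cases b₁ <;> interval_cases b₂ <;> interval_cases b₃ <;> interval_cases b₄ <;> omega

lemma exists_eq_pvec_of_antitone {d : ℕ} (hd : 4 ≤ d) {b : Fin (d + 1) → ℕ} (hb : Antitone b)
    (hsum : ∑ i, b i = 5) :
    ∃ l ∈ [[5], [4, 1], [3, 2], [3, 1, 1], [2, 2, 1], [2, 1, 1, 1], [1, 1, 1, 1, 1]],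
      b = pvec d l := by
  have hbound : ∀ i : Fin (d + 1), ((i : ℕ) + 1) * b i ≤ 5 := fun i => by
    calc ((i : ℕ) + 1) * b i = ∑ _j ∈ Finset.Iic i, b i := by simp
      _ ≤ ∑ j ∈ Finset.Iic i, b j := Finset.sum_le_sum fun j hj => hb (Finset.mem_Iic.1 hj)
      _ ≤ ∑ j, b j := Finset.sum_le_sum_of_subset (Finset.subset_univ _)
      _ = 5 := hsum
  have hzero : ∀ i : Fin (d + 1), 5 ≤ (i : ℕ) → b i = 0 := fun i hi => by
    by_contra h
    have := Nat.mul_le_mul (show 6 ≤ (i : ℕ) + 1 by omega) (Nat.one_le_iff_ne_zero.2 h)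
    have := hbound i
    omega
  obtain ⟨e, rfl⟩ := Nat.exists_eq_add_of_le' hd
  have hsplit : b 0 + (b 1 + (b 2 + (b 3 + b 4))) = 5 := by
    rw [← hsum]
    simp only [Fin.sum_univ_succ (n := e + 4), Fin.sum_univ_succ (n := e + 3),
      Fin.sum_univ_succ (n := e + 2), Fin.sum_univ_succ (n := e + 1), Fin.sum_univ_succ (n := e)]
    rw [Finset.sum_eq_zero fun i _ => hzero _ (by simp)]
    rfl
  have h01 : b 1 ≤ b 0 := hb (Fin.zero_le _)
  have h12 : b 2 ≤ b 1 := hb (Fin.le_def.2 (by simp [Nat.mod_eq_of_lt]))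
  have h23 : b 3 ≤ b 2 := hb (Fin.le_def.2 (by simp [Nat.mod_eq_of_lt]))
  have h34 : b 4 ≤ b 3 := hb (Fin.le_def.2 (by simp [Nat.mod_eq_of_lt]))
  have key : ∀ l : List ℕ, l.length ≤ 5 → b 0 = l.getD 0 0 → b 1 = l.getD 1 0 →
      b 2 = l.getD 2 0 → b 3 = l.getD 3 0 → b 4 = l.getD 4 0 → b = pvec (e + 4) l := by
    intro l hl h0 h1 h2 h3 h4
    funext i
    by_cases hi : 5 ≤ (i : ℕ)
    · rw [hzero i hi, pvec, List.getD_eq_default _ _ (hl.trans hi)]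
    · obtain ⟨i, hlt⟩ := i
      simp only [not_le] at hi
      interval_cases i
      exacts [h0, h1, h2, h3, h4]
  have hc := antitone_five_cases h01 h12 h23 h34 hsplit
  rcases hc with h | h | h | h | h | h | h <;> obtain ⟨h0, h1, h2, h3, h4⟩ := h
  · exact ⟨[5], by simp, key _ (by simp) h0 h1 h2 h3 h4⟩
  · exact ⟨[4, 1], by simp, key _ (by simp) h0 h1 h2 h3 h4⟩
  · exact ⟨[3, 2], by simp, key _ (by simp) h0 h1 h2 h3 h4⟩
  · exact ⟨[3, 1, 1], by simp, key _ (by simp) h0 h1 h2 h3 h4⟩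
  · exact ⟨[2, 2, 1], by simp, key _ (by simp) h0 h1 h2 h3 h4⟩
  · exact ⟨[2, 1, 1, 1], by simp, key _ (by simp) h0 h1 h2 h3 h4⟩
  · exact ⟨[1, 1, 1, 1, 1], by simp, key _ (by simp) h0 h1 h2 h3 h4⟩

lemma exists_eq_pvec_comp_perm {d : ℕ} (hd : 4 ≤ d) (β : Fin (d + 1) → ℕ)
    (hsum : ∑ i, β i = 5) :
    ∃ l ∈ [[5], [4, 1], [3, 2], [3, 1, 1], [2, 2, 1], [2, 1, 1, 1], [1, 1, 1, 1, 1]],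
      ∃ σ : Equiv.Perm (Fin (d + 1)), β = pvec d l ∘ σ := by
  set τ : Equiv.Perm (Fin (d + 1)) := Tuple.sort β * Fin.revPerm with hτ
  have hanti : Antitone (β ∘ τ) := fun i j hij =>
    Tuple.monotone_sort β (Fin.rev_le_rev.2 hij)
  obtain ⟨l, hl, h⟩ := exists_eq_pvec_of_antitone hd hanti ((Equiv.sum_comp τ β).trans hsum)
  refine ⟨l, hl, τ.symm, ?_⟩
  rw [← h]
  ext i
  simp

lemma pvec_two (d : ℕ) (hd : 2 ≤ d) (a b : ℕ) :
    pvec d [a, b] = Pi.single ⟨0, by omega⟩ a + Pi.single ⟨1, by omega⟩ b := by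
  funext ⟨i, hi⟩
  rcases i with _ | _ | i <;> simp [pvec]

lemma pvec_three (d : ℕ) (hd : 2 ≤ d) (a b c : ℕ) :
    pvec d [a, b, c] =
      Pi.single ⟨0, by omega⟩ a + Pi.single ⟨1, by omega⟩ b + Pi.single ⟨2, by omega⟩ c := by
  funext ⟨i, hi⟩
  rcases i with _ | _ | _ | i <;> simp [pvec]

lemma single_comp_perm {n : ℕ} (i : Fin n) (a : ℕ) (σ : Equiv.Perm (Fin n)) :
    (Pi.single i a : Fin n → ℕ) ∘ σ = Pi.single (σ.symm i) a := by
  ext j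
  simp [Pi.single_apply, Equiv.eq_symm_apply]

lemma prod_pow_single {n : ℕ} (x : Fin n → ℝ) (i : Fin n) (a : ℕ) :
    ∏ m, x m ^ (Pi.single i a : Fin n → ℕ) m = x i ^ a := by
  rw [Finset.prod_eq_single i] <;> simp +contextual

lemma injective_vecCons_three {α : Type*} {i j k : α} (hij : i ≠ j) (hik : i ≠ k) (hjk : j ≠ k) :
    Function.Injective ![i, j, k] := by
  intro s t h
  fin_cases s <;> fin_cases t <;> simp_all

lemma exists_perm_three {n : ℕ} {i j k i' j' k' : Fin n} (hij : i ≠ j) (hik : i ≠ k)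
    (hjk : j ≠ k) (hij' : i' ≠ j') (hik' : i' ≠ k') (hjk' : j' ≠ k') :
    ∃ σ : Equiv.Perm (Fin n), σ i = i' ∧ σ j = j' ∧ σ k = k' := by
  obtain ⟨σ, hσ⟩ := Equiv.Perm.exists_extending_pair ![i, j, k] ![i', j', k']
    (injective_vecCons_three hij hik hjk) (injective_vecCons_three hij' hik' hjk')
  exact ⟨σ, hσ 0, hσ 1, hσ 2⟩

lemma exists_perm_two {n : ℕ} {i j i' j' : Fin n} (hij : i ≠ j) (hij' : i' ≠ j') :
    ∃ σ : Equiv.Perm (Fin n), σ i = i' ∧ σ j = j' := by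
  have hinj : ∀ {i j : Fin n}, i ≠ j → Function.Injective ![i, j] := by
    intro i j h s t
    fin_cases s <;> fin_cases t <;> simp [h, h.symm]
  obtain ⟨σ, hσ⟩ := Equiv.Perm.exists_extending_pair ![i, j] ![i', j'] (hinj hij) (hinj hij')
  exact ⟨σ, hσ 0, hσ 1⟩

lemma card_mul_msymmEval {ι : Type*} (d : ℕ) (lv : Fin (d + 1) → ℕ) (T : Finset ι)
    (F : ι → Fin (d + 1) → ℕ) (c : ℕ)
    (himage : T.image F = Finset.image (fun σ : Equiv.Perm (Fin (d + 1)) => lv ∘ σ) Finset.univ)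
    (hfiber : ∀ t ∈ T, (T.filter fun s => F s = F t).card = c) (x : Fin (d + 1) → ℝ) :
    c * msymmEval d lv x = ∑ t ∈ T, ∏ m, x m ^ F t m := by
  rw [Finset.sum_comp (fun β : Fin (d + 1) → ℕ => ∏ m, x m ^ β m) F, himage, msymmEval,
    Finset.mul_sum]
  refine Finset.sum_congr rfl fun β hβ => ?_
  rw [← himage] at hβ
  obtain ⟨t, ht, rfl⟩ := Finset.mem_image.1 hβ
  rw [hfiber t ht, nsmul_eq_mul]

lemma msymmEval_two (d : ℕ) (hd : 2 ≤ d) {a b : ℕ} (ha : a ≠ 0) (hb : b ≠ 0) (hab : a ≠ b)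
    (x : Fin (d + 1) → ℝ) :
    msymmEval d (pvec d [a, b]) x =
      (∑ i, x i ^ a) * (∑ i, x i ^ b) - ∑ i, x i ^ (a + b) := by
  have h := card_mul_msymmEval d (pvec d [a, b]) (Finset.univ.offDiag)
    (fun t => Pi.single t.1 a + Pi.single t.2 b) 1 ?_ ?_ x
  · rw [Nat.cast_one, one_mul] at h
    rw [h]
    have hterm : ∀ t : Fin (d + 1) × Fin (d + 1),
        ∏ m, x m ^ (Pi.single t.1 a + Pi.single t.2 b : Fin (d + 1) → ℕ) m =
          x t.1 ^ a * x t.2 ^ b := fun t => by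
      simp only [Pi.add_apply, pow_add, Finset.prod_mul_distrib, prod_pow_single]
    simp only [hterm]
    rw [Finset.sum_mul_sum, ← Finset.sum_product', ← Finset.diag_union_offDiag,
      Finset.sum_union (Finset.disjoint_diag_offDiag _), Finset.sum_diag]
    simp [pow_add]
  · ext β
    simp only [Finset.mem_image, Finset.mem_offDiag, Finset.mem_univ, true_and, Prod.exists,
      pvec_two d hd, Pi.add_comp, single_comp_perm]
    constructor
    · rintro ⟨i, j, hij, rfl⟩
      obtain ⟨σ, hi, hj⟩ := exists_perm_two (i := (⟨0, by omega⟩ : Fin (d + 1)))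
        (j := ⟨1, by omega⟩) (by simp) hij
      exact ⟨σ.symm, by rw [Equiv.symm_symm, hi, hj]⟩
    · rintro ⟨σ, rfl⟩
      exact ⟨_, _, by simp, rfl⟩
  · rintro ⟨i, j⟩ hij
    refine Finset.card_eq_one.2 ⟨(i, j), ?_⟩
    ext ⟨i', j'⟩
    simp only [Finset.mem_offDiag, Finset.mem_univ, true_and, Finset.mem_filter,
      Finset.mem_singleton, Prod.mk.injEq] at hij ⊢
    constructor
    · rintro ⟨hij', h⟩
      have h1 := congrFun h i
      have h2 := congrFun h j
      simp only [Pi.add_apply, Pi.single_apply] at h1 h2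
      grind
    · rintro ⟨rfl, rfl⟩
      exact ⟨hij, rfl⟩

/-- Sum over triples of pairwise distinct indices, by inclusion-exclusion. -/
lemma sum_distinct_triples {ι : Type*} [Fintype ι] [DecidableEq ι] (F G H : ι → ℝ) :
    ∑ t : ι × ι × ι with t.1 ≠ t.2.1 ∧ t.1 ≠ t.2.2 ∧ t.2.1 ≠ t.2.2, F t.1 * G t.2.1 * H t.2.2 =
      (∑ i, F i) * (∑ i, G i) * (∑ i, H i) - (∑ i, F i * G i) * (∑ i, H i)
        - (∑ i, F i * H i) * (∑ i, G i) - (∑ i, G i * H i) * (∑ i, F i)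
        + 2 * ∑ i, F i * G i * H i := by
  have hite : ∀ i j k : ι, (if i ≠ j ∧ i ≠ k ∧ j ≠ k then F i * G j * H k else 0) =
      F i * G j * H k - (if i = j then F i * G j * H k else 0)
        - (if i = k then F i * G j * H k else 0) - (if j = k then F i * G j * H k else 0)
        + 2 * (if i = j then if i = k then F i * G j * H k else 0 else 0) := by
    intro i j k
    by_cases hij : i = j <;> by_cases hik : i = k <;> by_cases hjk : j = k <;> simp_all <;> ring
  rw [Finset.sum_filter, Fintype.sum_prod_type]
  simp only [Fintype.sum_prod_type, hite, Finset.sum_add_distrib, Finset.sum_sub_distrib,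
    ← Finset.mul_sum, Finset.sum_ite_eq, Finset.sum_ite_irrel, Finset.sum_const_zero,
    Finset.mem_univ, if_true, ← Finset.sum_mul]
  have h₁ : ∀ i, F i * (∑ j, G j) * H i = F i * H i * ∑ j, G j := fun i => by ring
  have h₂ : ∀ i, ∑ j, F i * G j * H j = F i * ∑ j, G j * H j := fun i => by
    rw [Finset.mul_sum]
    exact Finset.sum_congr rfl fun j _ => by ring
  simp only [h₁, h₂, ← Finset.sum_mul]
  ring

lemma two_mul_msymmEval_three (d : ℕ) {a b : ℕ} (ha : a ≠ 0) (hb : b ≠ 0)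
    (hab : a ≠ b) {lv : Fin (d + 1) → ℕ}
    (hlv : ∃ i j k : Fin (d + 1), i ≠ j ∧ i ≠ k ∧ j ≠ k ∧
      lv = Pi.single i a + Pi.single j b + Pi.single k b)
    (x : Fin (d + 1) → ℝ) :
    2 * msymmEval d lv x =
      (∑ i, x i ^ a) * (∑ i, x i ^ b) * (∑ i, x i ^ b)
        - 2 * (∑ i, x i ^ (a + b)) * (∑ i, x i ^ b)
        - (∑ i, x i ^ (b + b)) * (∑ i, x i ^ a) + 2 * ∑ i, x i ^ (a + b + b) := by
  obtain ⟨i₀, j₀, k₀, hij₀, hik₀, hjk₀, rfl⟩ := hlv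
  have h := card_mul_msymmEval d (Pi.single i₀ a + Pi.single j₀ b + Pi.single k₀ b)
    (Finset.univ.filter fun t : Fin (d + 1) × Fin (d + 1) × Fin (d + 1) =>
      t.1 ≠ t.2.1 ∧ t.1 ≠ t.2.2 ∧ t.2.1 ≠ t.2.2)
    (fun t => Pi.single t.1 a + Pi.single t.2.1 b + Pi.single t.2.2 b) 2 ?_ ?_ x
  · rw [Nat.cast_ofNat] at h
    rw [h]
    simp only [Pi.add_apply, pow_add, Finset.prod_mul_distrib, prod_pow_single]
    rw [sum_distinct_triples (fun i => x i ^ a) (fun i => x i ^ b) (fun i => x i ^ b)]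
    ring
  · ext β
    simp only [Finset.mem_image, Finset.mem_filter, Finset.mem_univ, true_and, Prod.exists,
      Pi.add_comp, single_comp_perm]
    constructor
    · rintro ⟨i, j, k, ⟨hij, hik, hjk⟩, rfl⟩
      obtain ⟨σ, hi, hj, hk⟩ := exists_perm_three hij₀ hik₀ hjk₀ hij hik hjk
      exact ⟨σ.symm, by rw [Equiv.symm_symm, hi, hj, hk]⟩
    · rintro ⟨σ, rfl⟩
      exact ⟨_, _, _, by simp [*], rfl⟩
  · rintro ⟨i, j, k⟩ hijk
    simp only [Finset.mem_filter, Finset.mem_univ, true_and] at hijk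
    obtain ⟨hij, hik, hjk⟩ := hijk
    refine Finset.card_eq_two.2 ⟨(i, j, k), (i, k, j), by simp [hjk], ?_⟩
    ext ⟨i', j', k'⟩
    simp only [Finset.mem_univ, true_and, Finset.mem_filter, Finset.mem_insert,
      Finset.mem_singleton, Prod.mk.injEq]
    constructor
    · rintro ⟨⟨hij', hik', hjk'⟩, h⟩
      have h1 := congrFun h i
      have h2 := congrFun h j
      have h3 := congrFun h k
      simp only [Pi.add_apply, Pi.single_apply] at h1 h2 h3
      grind
    · rintro (⟨rfl, rfl, rfl⟩ | ⟨rfl, rfl, rfl⟩)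
      · exact ⟨⟨hij, hik, hjk⟩, rfl⟩
      · exact ⟨⟨hik, hij, hjk.symm⟩, add_right_comm _ _ _⟩

lemma two_mul_msymmEval_threeOneOne (d : ℕ) (hd : 2 ≤ d) (x : Fin (d + 1) → ℝ) :
    2 * msymmEval d (pvec d [3, 1, 1]) x =
      (∑ i, x i ^ 3) * (∑ i, x i ^ 1) * (∑ i, x i ^ 1)
        - 2 * (∑ i, x i ^ 4) * (∑ i, x i ^ 1)
        - (∑ i, x i ^ 2) * (∑ i, x i ^ 3) + 2 * ∑ i, x i ^ 5 :=
  two_mul_msymmEval_three d (by norm_num) (by norm_num) (by norm_num)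
    ⟨⟨0, by omega⟩, ⟨1, by omega⟩, ⟨2, by omega⟩, by simp, by simp, by simp,
      pvec_three d hd 3 1 1⟩ x

lemma two_mul_msymmEval_twoTwoOne (d : ℕ) (hd : 2 ≤ d) (x : Fin (d + 1) → ℝ) :
    2 * msymmEval d (pvec d [2, 2, 1]) x =
      (∑ i, x i ^ 1) * (∑ i, x i ^ 2) * (∑ i, x i ^ 2)
        - 2 * (∑ i, x i ^ 3) * (∑ i, x i ^ 2)
        - (∑ i, x i ^ 4) * (∑ i, x i ^ 1) + 2 * ∑ i, x i ^ 5 :=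
  two_mul_msymmEval_three d (by norm_num) (by norm_num) (by norm_num)
    ⟨⟨2, by omega⟩, ⟨0, by omega⟩, ⟨1, by omega⟩, by simp, by simp, by simp, by
      rw [pvec_three d hd 2 2 1]
      abel⟩ x

lemma sum_vk_pow (d k : ℕ) {n : ℕ} (hn : n ≠ 0) : ∑ i, vk d k i ^ n = ∑ i, vk d k i := by
  refine Finset.sum_congr rfl fun i _ => ?_
  unfold vk
  split_ifs <;> simp [hn]

lemma sum_uap_pow (d : ℕ) (a : ℝ) {p : ℕ} (hp : p ≤ d) {n : ℕ} (hn : n ≠ 0) :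
    ∑ i, uap d a p i ^ n = a ^ n + p := by
  rw [Fin.sum_univ_succ]
  have h : ∀ i : Fin d, uap d a p i.succ ^ n = if (i : ℕ) < p then 1 else 0 := fun i => by
    simp only [uap, Fin.val_succ, Nat.succ_ne_zero, if_false, Nat.succ_le_iff]
    split_ifs <;> simp [hn]
  simp only [h]
  rw [Fin.sum_univ_eq_sum_range (fun i => if i < p then (1 : ℝ) else 0) d]
  rw [Finset.sum_ite, Finset.sum_const_zero, add_zero,
    show (range d).filter (· < p) = range p by ext; simp; omega]
  simp [uap]

lemma msymmEval_vk_fourOne (d : ℕ) (hd : 2 ≤ d) (k : ℕ) :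
    msymmEval d (pvec d [4, 1]) (vk d k) = msymmEval d (pvec d [3, 2]) (vk d k) := by
  rw [msymmEval_two d hd (by norm_num) (by norm_num) (by norm_num),
    msymmEval_two d hd (by norm_num) (by norm_num) (by norm_num)]
  simp [sum_vk_pow]

lemma msymmEval_vk_threeOneOne (d : ℕ) (hd : 2 ≤ d) (k : ℕ) :
    msymmEval d (pvec d [3, 1, 1]) (vk d k) = msymmEval d (pvec d [2, 2, 1]) (vk d k) := by
  have h1 := two_mul_msymmEval_threeOneOne d hd (vk d k)
  have h2 := two_mul_msymmEval_twoTwoOne d hd (vk d k)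
  simp only [sum_vk_pow d k (show 1 ≠ 0 by norm_num), sum_vk_pow d k (show 2 ≠ 0 by norm_num),
    sum_vk_pow d k (show 3 ≠ 0 by norm_num), sum_vk_pow d k (show 4 ≠ 0 by norm_num)] at h1 h2
  linarith

lemma msymmEval_uap_fourOne_sub (d : ℕ) (hd : 2 ≤ d) (a : ℝ) {p : ℕ} (hp : p ≤ d) :
    msymmEval d (pvec d [4, 1]) (uap d a p) - msymmEval d (pvec d [3, 2]) (uap d a p) =
      p * a * (a - 1) ^ 2 * (a + 1) := by
  rw [msymmEval_two d hd (by norm_num) (by norm_num) (by norm_num),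
    msymmEval_two d hd (by norm_num) (by norm_num) (by norm_num)]
  rw [sum_uap_pow d a hp (by norm_num), sum_uap_pow d a hp (by norm_num),
    sum_uap_pow d a hp (by norm_num), sum_uap_pow d a hp (by norm_num),
    sum_uap_pow d a hp (by norm_num)]
  ring

lemma msymmEval_uap_threeOneOne_sub (d : ℕ) (hd : 2 ≤ d) (a : ℝ) {p : ℕ} (hp : p ≤ d) :
    msymmEval d (pvec d [3, 1, 1]) (uap d a p) - msymmEval d (pvec d [2, 2, 1]) (uap d a p) =
      p * (p - 1) / 2 * a * (a - 1) ^ 2 := by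
  have h1 := two_mul_msymmEval_threeOneOne d hd (uap d a p)
  have h2 := two_mul_msymmEval_twoTwoOne d hd (uap d a p)
  rw [sum_uap_pow d a hp (by norm_num), sum_uap_pow d a hp (by norm_num),
    sum_uap_pow d a hp (by norm_num), sum_uap_pow d a hp (by norm_num)] at h1 h2
  linear_combination (h1 - h2) / 2

lemma integral_eval_eq_sum (d : ℕ) {γ : ℝ} (hγ : -1 < γ) (f : MvPolynomial (Fin (d + 1)) ℝ) :
    wg d γ * ∫ x in Td d, MvPolynomial.eval (lift d x) f * Wg d γ x =
      ∑ m ∈ f.support, f.coeff m * momentMono d γ m := by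
  simp only [MvPolynomial.eval_eq', Finset.sum_mul, momentMono, mul_assoc]
  rw [integral_finsetSum, Finset.mul_sum]
  · refine Finset.sum_congr rfl fun m _ => ?_
    rw [integral_const_mul]
    ring
  · intro m _
    exact (integrableOn_comp_lift_mul_Wg d hγ (g := fun y => ∏ i, y i ^ m i)
      (by fun_prop)).const_mul _

lemma orbitAvg_eval_eq_sum (d : ℕ) (y : Fin (d + 1) → ℝ) (f : MvPolynomial (Fin (d + 1)) ℝ) :
    orbitAvg d y (fun z => MvPolynomial.eval z f) =
      ∑ m ∈ f.support, f.coeff m * orbitAvg d y (fun z => ∏ i, z i ^ m i) := by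
  simp only [MvPolynomial.eval_eq', orbitAvg_sum, orbitAvg_const_mul]

/-- Construction of cubature rules of index `5` on `𝒯^{d+1}`: with `a` and `A_6` determined
by the moments as stated, if the moment equations hold for the partitions
`(5), (4,1), (3,1,1), (2,1,1,1), (1,1,1,1,1)`, then they also hold for `(3,2)` and `(2,2,1)`,
and the cubature rule is exact for all homogeneous polynomials of degree `5`. -/
theorem cubature_index_five_construction
    (d : ℕ) (hd : 4 ≤ d) (γ : ℝ) (hγ : -1 < γ)
    (p : ℕ) (hp1 : 2 ≤ p) (hpd : p ≤ d)
    (hne : momentS d γ (pvec d [3, 1, 1]) ≠ momentS d γ (pvec d [2, 2, 1]))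
    (a : ℝ)
    (hadef : a = ((p : ℝ) - 1) / 2 *
        ((momentS d γ (pvec d [4, 1]) - momentS d γ (pvec d [3, 2])) /
          (momentS d γ (pvec d [3, 1, 1]) - momentS d γ (pvec d [2, 2, 1]))) - 1)
    (ha : 0 < a) (ha1 : a ≠ 1)
    (k : Fin 5 → ℕ) (hkinj : Function.Injective k)
    (hk1 : ∀ j, 1 ≤ k j) (hkd : ∀ j, k j ≤ d + 1)
    (A : Fin 5 → ℝ) (A6 : ℝ)
    (hA6 : A6 = (momentS d γ (pvec d [4, 1]) - momentS d γ (pvec d [3, 2])) /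
        ((p : ℝ) * a * (a - 1) ^ 2 * (a + 1)))
    (hmom : ∀ l ∈ [[5], [4, 1], [3, 1, 1], [2, 1, 1, 1], [1, 1, 1, 1, 1]],
      ∑ j, A j * msymmEval d (pvec d l) (vk d (k j))
          + A6 * msymmEval d (pvec d l) (uap d a p)
        = momentS d γ (pvec d l)) :
    (∀ l ∈ [[3, 2], [2, 2, 1]],
      ∑ j, A j * msymmEval d (pvec d l) (vk d (k j))
          + A6 * msymmEval d (pvec d l) (uap d a p)
        = momentS d γ (pvec d l))
    ∧
    (∀ f : MvPolynomial (Fin (d + 1)) ℝ, f.IsHomogeneous 5 →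
      wg d γ * ∫ x in Td d, MvPolynomial.eval (lift d x) f * Wg d γ x
        = (∑ j, A j * orbitAvg d (vk d (k j)) (fun z => MvPolynomial.eval z f))
          + A6 * orbitAvg d (uap d a p) (fun z => MvPolynomial.eval z f)) := by
  have hd2 : 2 ≤ d := by omega
  have ha1' : a - 1 ≠ 0 := sub_ne_zero.2 ha1
  have hp0 : (p : ℝ) ≠ 0 := by positivity
  have hA6' : A6 * (p * a * (a - 1) ^ 2 * (a + 1)) =
      momentS d γ (pvec d [4, 1]) - momentS d γ (pvec d [3, 2]) := by
    rw [hA6]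
    field_simp
  have hadef' : (a + 1) * (momentS d γ (pvec d [3, 1, 1]) - momentS d γ (pvec d [2, 2, 1])) =
      (p - 1) / 2 * (momentS d γ (pvec d [4, 1]) - momentS d γ (pvec d [3, 2])) := by
    have hne' := sub_ne_zero.2 hne
    rw [hadef]
    field_simp
    ring
  have h41 := hmom [4, 1] (by simp)
  have h311 := hmom [3, 1, 1] (by simp)
  have h32 : ∑ j, A j * msymmEval d (pvec d [3, 2]) (vk d (k j))
      + A6 * msymmEval d (pvec d [3, 2]) (uap d a p) = momentS d γ (pvec d [3, 2]) := by
    simp only [msymmEval_vk_fourOne d hd2] at h41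
    linear_combination h41 - hA6' - A6 * msymmEval_uap_fourOne_sub d hd2 a hpd
  have h221 : ∑ j, A j * msymmEval d (pvec d [2, 2, 1]) (vk d (k j))
      + A6 * msymmEval d (pvec d [2, 2, 1]) (uap d a p) = momentS d γ (pvec d [2, 2, 1]) := by
    simp only [msymmEval_vk_threeOneOne d hd2] at h311
    have hdiff : A6 * (p * (p - 1) / 2 * a * (a - 1) ^ 2) =
        momentS d γ (pvec d [3, 1, 1]) - momentS d γ (pvec d [2, 2, 1]) := by
      refine mul_left_cancel₀ (show a + 1 ≠ 0 by positivity) ?_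
      linear_combination (p - 1) / 2 * hA6' - hadef'
    linear_combination h311 - hdiff - A6 * msymmEval_uap_threeOneOne_sub d hd2 a hpd
  have hall : ∀ l ∈ [[5], [4, 1], [3, 2], [3, 1, 1], [2, 2, 1], [2, 1, 1, 1], [1, 1, 1, 1, 1]],
      ∑ j, A j * msymmEval d (pvec d l) (vk d (k j)) + A6 * msymmEval d (pvec d l) (uap d a p)
        = momentS d γ (pvec d l) := by
    intro l hl
    simp only [List.mem_cons, List.not_mem_nil, or_false] at hl hmom
    rcases hl with rfl | rfl | rfl | rfl | rfl | rfl | rfl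
    exacts [hmom _ (by simp), h41, h32, h311, h221, hmom _ (by simp), hmom _ (by simp)]
  have hmono : ∀ β : Fin (d + 1) → ℕ, ∑ i, β i = 5 → momentMono d γ β =
      (∑ j, A j * orbitAvg d (vk d (k j)) (fun z => ∏ i, z i ^ β i))
        + A6 * orbitAvg d (uap d a p) (fun z => ∏ i, z i ^ β i) := by
    intro β hβ
    obtain ⟨l, hl, σ, rfl⟩ := exists_eq_pvec_comp_perm hd β hβ
    simp only [momentMono_comp_perm, orbitAvg_mono_comp_perm]
    refine mul_left_cancel₀ (card_image_perm_ne_zero (pvec d l)) ?_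
    rw [← momentS_eq_card_mul d hγ, ← hall l hl]
    simp only [msymmEval_eq_card_mul]
    rw [mul_add, Finset.mul_sum]
    congr 1
    · exact Finset.sum_congr rfl fun j _ => by ring
    · ring
  refine ⟨fun l hl => hall l ?_, fun f hf => ?_⟩
  · simp only [List.mem_cons, List.not_mem_nil, or_false] at hl
    rcases hl with rfl | rfl <;> simp
  · rw [integral_eval_eq_sum d hγ]
    simp only [orbitAvg_eval_eq_sum, Finset.mul_sum]
    rw [Finset.sum_comm, ← Finset.sum_add_distrib]
    refine Finset.sum_congr rfl fun m hm => ?_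
    have hdeg : ∑ i, m i = 5 := by
      rw [← Finsupp.degree_eq_sum]
      rw [Finsupp.degree_eq_weight_one]
      exact hf (MvPolynomial.mem_support_iff.1 hm)
    rw [hmono m hdeg, mul_add, Finset.mul_sum]
    congr 1
    · exact Finset.sum_congr rfl fun j _ => by ring
    · ring
end
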